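/- arXiv:1101.0967 — 2 statements merged into one kernel-verified Lean document; each statement's English description precedes it below -/
import Mathlib

section
/- For any n ≥ 3 and any sequence x₁, …, xₙ of pairwise distinct real numbers, there exist reals y₁, …, yₙ such that the closed polygon with vertices (x₁,y₁), (x₂,y₂), …, (xₙ,yₙ) (in this cyclic order) is simple, i.e., non-self-intersecting. -/
/-- A closed polygonal path `p 0, p 1, …, p (n-1)` (cyclically) is simple: any two
non-adjacent edges are disjoint, and any two consecutive edges meet exactly in their
common endpoint. -/
def IsSimplePolygon {n : ℕ} [NeZero n] (p : Fin n → ℝ × ℝ) : Prop :=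
  (∀ k : Fin n,
      segment ℝ (p k) (p (k + 1)) ∩ segment ℝ (p (k + 1)) (p (k + 2)) = {p (k + 1)}) ∧
    ∀ k l : Fin n, k ≠ l → l ≠ k + 1 → k ≠ l + 1 →
      segment ℝ (p k) (p (k + 1)) ∩ segment ℝ (p l) (p (l + 1)) = ∅

/-! Renumber the vertices cyclically so that `p 0` is the leftmost one, and give the vertex `p k`
the height making the slope of the segment from `p 0` to `p k` equal to `k`. Seen from `p 0`, the
other vertices then turn counterclockwise inside a half-plane, so any two edges are separated by
one of the lines joining `p 0` to another vertex. -/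

theorem IsSimplePolygon.of_comp_add_right {n : ℕ} [NeZero n] {p : Fin n → ℝ × ℝ} (a : Fin n)
    (hp : IsSimplePolygon fun k => p (k + a)) : IsSimplePolygon p := by
  refine ⟨fun k => ?_, fun k l hkl hlk hkl' => ?_⟩
  · simpa only [add_right_comm _ _ a, sub_add_cancel] using hp.1 (k - a)
  · simpa only [add_right_comm _ _ a, sub_add_cancel] using
      hp.2 (k - a) (l - a) (by grind) (by grind) (by grind)

section Separation

variable {𝕜 E : Type*} [Field 𝕜] [LinearOrder 𝕜] [IsStrictOrderedRing 𝕜] [AddCommGroup E]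
  [Module 𝕜 E] {a b c d : E}

theorem disjoint_segment_of_max_lt_min (f : E →ₗ[𝕜] 𝕜)
    (h : max (f a) (f b) < min (f c) (f d)) : Disjoint (segment 𝕜 a b) (segment 𝕜 c d) := by
  rw [Set.disjoint_left]
  intro z hab hcd
  have h_le : f z ≤ max (f a) (f b) :=
    (convex_halfSpace_le f.isLinear _).segment_subset (le_max_left _ _) (le_max_right _ _) hab
  have h_ge : min (f c) (f d) ≤ f z :=
    (convex_halfSpace_ge f.isLinear _).segment_subset (min_le_left _ _) (min_le_right _ _) hcd
  exact (h_le.trans_lt h).not_ge h_ge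

theorem eq_right_of_mem_segment_of_map_eq (f : E →ₗ[𝕜] 𝕜) (hab : f a ≠ f b) {z : E}
    (hz : z ∈ segment 𝕜 a b) (hzb : f z = f b) : z = b := by
  rw [segment_eq_image_lineMap] at hz
  obtain ⟨t, -, rfl⟩ := hz
  have h : (1 - t) * (f b - f a) = 0 := by
    simp only [AffineMap.lineMap_apply_module, map_add, map_smul, smul_eq_mul] at hzb
    linear_combination -hzb
  obtain rfl : t = 1 := by
    rcases mul_eq_zero.1 h with h | h
    · exact (sub_eq_zero.1 h).symm
    · exact absurd (sub_eq_zero.1 h).symm hab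
  exact AffineMap.lineMap_apply_one a b

theorem segment_inter_segment_eq_singleton (f : E →ₗ[𝕜] 𝕜) (hab : f a ≤ f b)
    (hbc : f b ≤ f c) (hac : f a < f c) : segment 𝕜 a b ∩ segment 𝕜 b c = {b} := by
  refine Set.Subset.antisymm ?_ (Set.singleton_subset_iff.2
    ⟨right_mem_segment 𝕜 a b, left_mem_segment 𝕜 b c⟩)
  rintro z ⟨hz_ab, hz_bc⟩
  have h_le : f z ≤ f b := (convex_halfSpace_le f.isLinear _).segment_subset hab le_rfl hz_ab
  have h_ge : f b ≤ f z := (convex_halfSpace_ge f.isLinear _).segment_subset le_rfl hbc hz_bc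
  have hzb : f z = f b := h_le.antisymm h_ge
  rcases hab.eq_or_lt with hab | hab
  · exact eq_right_of_mem_segment_of_map_eq f (hab ▸ hac).ne' (segment_symm 𝕜 b c ▸ hz_bc) hzb
  · exact eq_right_of_mem_segment_of_map_eq f hab.ne hz_ab hzb

end Separation

/-- The cross product `u.1 * v.2 - u.2 * v.1` of plane vectors, as a linear functional of `v`: its
sign tells on which side of the line spanned by `u` the vector `v` lies. -/
def planeCross (u : ℝ × ℝ) : ℝ × ℝ →ₗ[ℝ] ℝ :=
  u.1 • LinearMap.snd ℝ ℝ ℝ - u.2 • LinearMap.fst ℝ ℝ ℝ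

theorem planeCross_apply (u v : ℝ × ℝ) : planeCross u v = u.1 * v.2 - u.2 * v.1 := rfl

theorem planeCross_swap (u v : ℝ × ℝ) : planeCross u v = -planeCross v u := by
  simp only [planeCross_apply]
  ring

theorem planeCross_sub_apply_left_eq_right (u v : ℝ × ℝ) :
    planeCross (u - v) u = planeCross (u - v) v := by
  simp only [planeCross_apply, Prod.fst_sub, Prod.snd_sub]
  ring

theorem lt_add_one_or_add_one_eq_zero {n : ℕ} (k : Fin (n + 1)) : k < k + 1 ∨ k + 1 = 0 := by
  rcases (Fin.le_last k).lt_or_eq with hk | rfl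
  · exact .inl (Fin.lt_add_one_iff.2 hk)
  · exact .inr (Fin.last_add_one n)

/-- The polygon `p` is a fan with apex `p 0`: seen from `p 0`, the vertices `p 1, p 2, …` turn
strictly counterclockwise. Since this is required of all pairs and not only of consecutive vertices,
the total turn is less than a half-turn. -/
def IsFan {n : ℕ} [NeZero n] (p : Fin n → ℝ × ℝ) : Prop :=
  ∀ i j : Fin n, 0 < i → i < j → 0 < planeCross (p i - p 0) (p j - p 0)

namespace IsFan

section Edges

variable {n : ℕ} [NeZero n] {p : Fin n → ℝ × ℝ} {i j k l : Fin n}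

theorem planeCross_apex_lt (hp : IsFan p) (hj : 0 < j) (hji : j < i) :
    planeCross (p j - p 0) (p 0) < planeCross (p j - p 0) (p i) := by
  simpa only [map_sub, sub_pos] using hp j i hj hji

theorem planeCross_lt_apex (hp : IsFan p) (hi : 0 < i) (hij : i < j) :
    planeCross (p j - p 0) (p i) < planeCross (p j - p 0) (p 0) := by
  have h := hp i j hi hij
  rw [planeCross_swap, map_sub] at h
  linarith

theorem planeCross_le_apex (hp : IsFan p) (hij : i < j) :
    planeCross (p j - p 0) (p i) ≤ planeCross (p j - p 0) (p 0) := by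
  rcases (Fin.zero_le i).eq_or_lt with rfl | hi
  · rfl
  · exact (hp.planeCross_lt_apex hi hij).le

theorem disjoint_segment (hp : IsFan p) (hij : i < j) (hjk : j < k) (hjl : j < l) :
    Disjoint (segment ℝ (p i) (p j)) (segment ℝ (p k) (p l)) := by
  have hj : 0 < j := (Fin.zero_le i).trans_lt hij
  refine disjoint_segment_of_max_lt_min (planeCross (p j - p 0)) ?_
  rw [planeCross_sub_apply_left_eq_right, max_eq_right (hp.planeCross_le_apex hij)]
  exact lt_min (hp.planeCross_apex_lt hj hjk) (hp.planeCross_apex_lt hj hjl)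

theorem disjoint_segment_apex (hp : IsFan p) (hi : 0 < i) (hj : 0 < j) (hik : i < k)
    (hjk : j < k) : Disjoint (segment ℝ (p i) (p j)) (segment ℝ (p k) (p 0)) := by
  refine disjoint_segment_of_max_lt_min (planeCross (p k - p 0)) ?_
  rw [planeCross_sub_apply_left_eq_right, min_self]
  exact max_lt (hp.planeCross_lt_apex hi hik) (hp.planeCross_lt_apex hj hjk)

theorem segment_inter_segment (hp : IsFan p) (hij : i < j) (hjk : j < k) :
    segment ℝ (p i) (p j) ∩ segment ℝ (p j) (p k) = {p j} := by
  have h_le := hp.planeCross_le_apex hij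
  have h_lt := hp.planeCross_apex_lt ((Fin.zero_le i).trans_lt hij) hjk
  rw [← planeCross_sub_apply_left_eq_right] at h_le h_lt
  exact segment_inter_segment_eq_singleton _ h_le h_lt.le (h_le.trans_lt h_lt)

theorem segment_inter_segment_apex (hp : IsFan p) (hi : 0 < i) (hij : i < j) :
    segment ℝ (p i) (p j) ∩ segment ℝ (p j) (p 0) = {p j} := by
  have h_lt := hp.planeCross_lt_apex hi hij
  have h_eq := planeCross_sub_apply_left_eq_right (p j) (p 0)
  exact segment_inter_segment_eq_singleton _ (h_lt.trans_eq h_eq.symm).le h_eq.le h_lt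

theorem segment_apex_inter_segment_apex (hp : IsFan p) (hi : 0 < i) (hij : i < j) :
    segment ℝ (p j) (p 0) ∩ segment ℝ (p 0) (p i) = {p 0} := by
  have h_lt := neg_lt_neg (hp.planeCross_lt_apex hi hij)
  have h_eq := congrArg Neg.neg (planeCross_sub_apply_left_eq_right (p j) (p 0))
  exact segment_inter_segment_eq_singleton (-planeCross (p j - p 0)) h_eq.le h_lt.le
    (h_eq.trans_lt h_lt)

end Edges

theorem edge_inter_next_edge {n : ℕ} {p : Fin (n + 3) → ℝ × ℝ} (hp : IsFan p) (k : Fin (n + 3)) :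
    segment ℝ (p k) (p (k + 1)) ∩ segment ℝ (p (k + 1)) (p (k + 2)) = {p (k + 1)} := by
  have h_two : (2 : Fin (n + 3)) ≠ 0 := by
    rw [Ne, Fin.ext_iff, Fin.val_two, Fin.val_zero]
    exact two_ne_zero
  have succ_succ : k + 2 = k + 1 + 1 := (add_assoc k 1 1).symm
  rcases lt_add_one_or_add_one_eq_zero k with hk | hk
  · rcases lt_add_one_or_add_one_eq_zero (k + 1) with hk' | hk'
    · rw [succ_succ]
      exact hp.segment_inter_segment hk hk'
    · have hk₀ : k ≠ 0 := fun h => h_two (by rwa [← succ_succ, h, zero_add] at hk')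
      rw [succ_succ, hk']
      exact hp.segment_inter_segment_apex (Fin.pos_iff_ne_zero.2 hk₀) hk
  · have hk₀ : k ≠ 0 := fun h => Fin.zero_ne_one (by rw [← hk, h, zero_add])
    have hk₁ : k ≠ 1 := fun h => h_two (by rwa [h] at hk)
    have h_one_lt : 1 < k := (Fin.one_le_of_ne_zero hk₀).lt_of_ne hk₁.symm
    rw [succ_succ, hk, zero_add]
    exact hp.segment_apex_inter_segment_apex Fin.zero_lt_one h_one_lt

theorem disjoint_edges_of_lt {n : ℕ} {p : Fin (n + 1) → ℝ × ℝ} (hp : IsFan p) {k l : Fin (n + 1)}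
    (hkl : k < l) (hlk : l ≠ k + 1) (hkl' : k ≠ l + 1) :
    Disjoint (segment ℝ (p k) (p (k + 1))) (segment ℝ (p l) (p (l + 1))) := by
  have hk : k < k + 1 := Fin.lt_add_one_iff.2 (hkl.trans_le (Fin.le_last l))
  have hl : k + 1 < l := (Fin.add_one_le_of_lt hkl).lt_of_ne hlk.symm
  rcases lt_add_one_or_add_one_eq_zero l with h | h
  · exact hp.disjoint_segment hk hl (hl.trans h)
  · rw [h] at hkl' ⊢
    exact hp.disjoint_segment_apex (Fin.pos_iff_ne_zero.2 hkl') ((Fin.zero_le k).trans_lt hk) hkl hl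

theorem isSimplePolygon {n : ℕ} {p : Fin (n + 3) → ℝ × ℝ} (hp : IsFan p) : IsSimplePolygon p := by
  refine ⟨hp.edge_inter_next_edge, fun k l hkl hlk hkl' => Disjoint.inter_eq ?_⟩
  rcases hkl.lt_or_gt with h | h
  · exact hp.disjoint_edges_of_lt h hlk hkl'
  · exact (hp.disjoint_edges_of_lt h hkl' hlk).symm

end IsFan

theorem isFan_prodMk_val_mul_sub {n : ℕ} [NeZero n] {x : Fin n → ℝ}
    (hx : ∀ k, k ≠ 0 → x 0 < x k) : IsFan fun k => (x k, k.val * (x k - x 0)) := by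
  intro i j hi hij
  have hij' : (i : ℝ) < j := by exact_mod_cast hij
  have hxi := sub_pos.2 (hx i hi.ne')
  have hxj := sub_pos.2 (hx j (hi.trans hij).ne')
  calc
    0 < ((j : ℝ) - i) * ((x i - x 0) * (x j - x 0)) :=
      mul_pos (sub_pos.2 hij') (mul_pos hxi hxj)
    _ = planeCross _ _ := by
      simp only [planeCross_apply, Prod.fst_sub, Prod.snd_sub]
      ring

theorem exists_simple_polygon_general (n : ℕ) [NeZero n] (hn : 3 ≤ n) (x : Fin n → ℝ) (a : Fin n)
    (ha : ∀ k, k ≠ a → x a < x k) :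
    ∃ y : Fin n → ℝ, IsSimplePolygon (fun k => (x k, y k)) := by
  obtain ⟨n, rfl⟩ := Nat.exists_eq_add_of_le' hn
  have h_fan := isFan_prodMk_val_mul_sub (x := fun k => x (k + a)) fun k hk => by
    simpa using ha (k + a) (by simpa using hk)
  refine ⟨fun k => (k - a).val * (x k - x a), .of_comp_add_right a ?_⟩
  simpa using h_fan.isSimplePolygon

/-- Stretchability of cycles with prescribed `x`-coordinates: for any `n ≥ 3` and
pairwise distinct reals `x 0, …, x (n-1)`, there are `y`-coordinates making the closed
polygon with vertices `(x k, y k)` (in this cyclic order) simple. -/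
theorem exists_simple_polygon (n : ℕ) [NeZero n] (hn : 3 ≤ n) (x : Fin n → ℝ)
    (hx : Function.Injective x) :
    ∃ y : Fin n → ℝ, IsSimplePolygon (fun k => (x k, y k)) := by
  obtain ⟨a, ha⟩ := Finite.exists_min x
  exact exists_simple_polygon_general n hn x a fun k hk => (ha k).lt_of_ne (hx.ne hk.symm)
end

section
/- Among any four consecutive vertices v₁, v₂, v₃, v₄ on the boundary cycle of a face of a plane graph, at least one of the pairs (v₁, v₃), (v₂, v₄) is non-adjacent in the graph, provided the face has at least 4 distinct boundary vertices and the graph is simple and planar with this face having more than 3 vertices. -/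
/-!
Eilenberg's criterion says that a compact plane set `K` fails to separate `p` from `q` exactly when
`(z - p) / (z - q)` has a continuous logarithm on `K`. Logarithms pull back to the parameter
interval of an arc, so arcs do not separate the plane; logarithms on two closed sets can be glued
when the intersection is connected, which is Janiszewski's theorem: if neither of two compact sets
with connected intersection separates `p` from `q`, then neither does their union.

Now let `x₀` lie in the face, let `D` and `E` be disjoint diagonals outside the face, and cut the
curve at the ends of `D` into two arcs. Each arc together with `D` is a compact set, and the two
sets meet in `D`. A point of `E` on one of the two arcs lies on the boundary of the face, so the
other set does not separate it from `x₀`. As `E` is connected and touches both arcs, some point of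
`E` is separated from `x₀` by neither set, hence not by the whole curve: `E` enters the face.
-/

open Set Topology

namespace PlaneSeparation

section ContinuousLog

variable {X Y : Type*} [TopologicalSpace X] [TopologicalSpace Y] {g g' : X → ℂ} {s t : Set X}

/-- `g` has a continuous logarithm on `s`; in particular `g` does not vanish on `s`. -/
def HasContinuousLogOn (g : X → ℂ) (s : Set X) : Prop :=
  ∃ L : X → ℂ, ContinuousOn L s ∧ ∀ x ∈ s, Complex.exp (L x) = g x

theorem HasContinuousLogOn.ne_zero (h : HasContinuousLogOn g s) {x : X} (hx : x ∈ s) :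
    g x ≠ 0 := by
  obtain ⟨L, -, hL⟩ := h
  exact hL x hx ▸ Complex.exp_ne_zero _

theorem HasContinuousLogOn.mono (h : HasContinuousLogOn g t) (hst : s ⊆ t) :
    HasContinuousLogOn g s := by
  obtain ⟨L, hLc, hL⟩ := h
  exact ⟨L, hLc.mono hst, fun x hx ↦ hL x (hst hx)⟩

theorem HasContinuousLogOn.congr (h : HasContinuousLogOn g s) (hg : EqOn g g' s) :
    HasContinuousLogOn g' s := by
  obtain ⟨L, hLc, hL⟩ := h
  exact ⟨L, hLc, fun x hx ↦ (hL x hx).trans (hg hx)⟩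

theorem HasContinuousLogOn.inv (h : HasContinuousLogOn g s) : HasContinuousLogOn g⁻¹ s := by
  obtain ⟨L, hLc, hL⟩ := h
  exact ⟨-L, hLc.neg, fun x hx ↦ by simp [Complex.exp_neg, hL x hx]⟩

theorem HasContinuousLogOn.mul (h : HasContinuousLogOn g s) (h' : HasContinuousLogOn g' s) :
    HasContinuousLogOn (g * g') s := by
  obtain ⟨L, hLc, hL⟩ := h
  obtain ⟨M, hMc, hM⟩ := h'
  exact ⟨L + M, hLc.add hMc, fun x hx ↦ by simp [Complex.exp_add, hL x hx, hM x hx]⟩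

theorem hasContinuousLogOn_of_mapsTo_slitPlane (hg : ContinuousOn g s)
    (hs : MapsTo g s Complex.slitPlane) : HasContinuousLogOn g s :=
  ⟨fun x ↦ Complex.log (g x), hg.clog hs,
    fun _ hx ↦ Complex.exp_log (Complex.slitPlane_ne_zero (hs hx))⟩

theorem hasContinuousLogOn_univ [SimplyConnectedSpace X] [LocallyPathConnectedSpace X]
    (hg : Continuous g) (h0 : ∀ x, g x ≠ 0) : HasContinuousLogOn g univ := by
  obtain ⟨x₀⟩ : Nonempty X := inferInstance
  obtain ⟨L, ⟨-, hL⟩, -⟩ := Complex.isCoveringMapOn_exp.existsUnique_continuousMap_lifts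
    ⟨g, hg⟩ (Complex.exp_log (h0 x₀)) h0
  exact ⟨L, L.continuous.continuousOn, fun x _ ↦ congrFun hL x⟩

theorem hasContinuousLogOn_Icc {a b : ℝ} {g : ℝ → ℂ} (hg : ContinuousOn g (Icc a b))
    (h0 : ∀ t ∈ Icc a b, g t ≠ 0) : HasContinuousLogOn g (Icc a b) := by
  rcases lt_or_ge b a with hba | hab
  · exact ⟨0, continuousOn_const, by simp [Icc_eq_empty_of_lt hba]⟩
  · have hext : HasContinuousLogOn (IccExtend hab ((Icc a b).domRestrict g)) univ :=
      hasContinuousLogOn_univ hg.domRestrict.Icc_extend' fun t ↦ h0 _ (projIcc a b hab t).2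
    exact (hext.mono (subset_univ _)).congr fun t ht ↦ IccExtend_of_mem hab _ ht

theorem HasContinuousLogOn.image [T2Space X] {γ : Y → X} {K : Set Y}
    (h : HasContinuousLogOn (g ∘ γ) K) (hK : IsCompact K) (hγ : ContinuousOn γ K)
    (hinj : InjOn γ K) : HasContinuousLogOn g (γ '' K) := by
  rcases K.eq_empty_or_nonempty with rfl | ⟨y₀, -⟩
  · exact ⟨0, continuousOn_const, by simp⟩
  have : Nonempty Y := ⟨y₀⟩
  have : CompactSpace K := isCompact_iff_compactSpace.1 hK
  obtain ⟨L, hLc, hL⟩ := h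
  have hinv : LeftInvOn (Function.invFunOn γ K) γ K := hinj.leftInvOn_invFunOn
  have hquot : IsQuotientMap (imageFactorization γ K) :=
    .of_surjective_continuous imageFactorization_surjective (hγ.domRestrict.subtype_mk _)
  refine ⟨L ∘ Function.invFunOn γ K, ?_, ?_⟩
  · rw [continuousOn_iff_continuous_domRestrict, hquot.continuous_iff]
    exact hLc.domRestrict.congr fun y ↦ congrArg L (hinv y.2).symm
  · rintro _ ⟨y, hy, rfl⟩
    rw [Function.comp_apply, hinv hy, hL y hy, Function.comp_apply]

theorem eqOn_of_exp_eqOn {L M : X → ℂ} (hs : IsPreconnected s) (hL : ContinuousOn L s)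
    (hM : ContinuousOn M s) (h : ∀ x ∈ s, Complex.exp (L x) = Complex.exp (M x)) {a : X}
    (ha : a ∈ s) (hLM : L a = M a) : EqOn L M s :=
  Complex.isCoveringMap_exp.eqOn_of_comp_eqOn hs hL hM (fun x hx ↦ Subtype.ext (h x hx)) ha hLM

theorem exists_exp_eq_one_eqOn_add {L M : X → ℂ} (hs : IsPreconnected s) (hL : ContinuousOn L s)
    (hM : ContinuousOn M s) (h : ∀ x ∈ s, Complex.exp (L x) = Complex.exp (M x)) :
    ∃ c : ℂ, Complex.exp c = 1 ∧ EqOn L (fun x ↦ M x + c) s := by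
  rcases s.eq_empty_or_nonempty with rfl | ⟨a, ha⟩
  · exact ⟨0, Complex.exp_zero, eqOn_empty _ _⟩
  have hc : Complex.exp (L a - M a) = 1 := by
    rw [Complex.exp_sub, h a ha, div_self (Complex.exp_ne_zero _)]
  refine ⟨L a - M a, hc, eqOn_of_exp_eqOn hs hL (hM.add continuousOn_const) (fun x hx ↦ ?_) ha
    (by ring)⟩
  rw [Complex.exp_add, hc, mul_one, h x hx]

theorem HasContinuousLogOn.union (h : HasContinuousLogOn g s) (h' : HasContinuousLogOn g t)
    (hs : IsClosed s) (ht : IsClosed t) (hst : IsPreconnected (s ∩ t)) :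
    HasContinuousLogOn g (s ∪ t) := by
  classical
  obtain ⟨L, hLc, hL⟩ := h
  obtain ⟨M, hMc, hM⟩ := h'
  obtain ⟨c, hc, hLM⟩ := exists_exp_eq_one_eqOn_add hst (hLc.mono inter_subset_left)
    (hMc.mono inter_subset_right) fun x hx ↦ (hL x hx.1).trans (hM x hx.2).symm
  have heq_left : EqOn (s.piecewise L fun x ↦ M x + c) L s := piecewise_eqOn _ _ _
  have heq_right : EqOn (s.piecewise L fun x ↦ M x + c) (fun x ↦ M x + c) t := by
    intro x hx
    by_cases hxs : x ∈ s
    · exact (heq_left hxs).trans (hLM ⟨hxs, hx⟩)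
    · exact piecewise_eq_of_notMem _ _ _ hxs
  refine ⟨_, (hLc.congr heq_left).union_of_isClosed
    ((hMc.add continuousOn_const).congr heq_right) hs ht, ?_⟩
  rintro x (hx | hx)
  · rw [heq_left hx, hL x hx]
  · rw [heq_right hx, Complex.exp_add, hc, mul_one, hM x hx]

theorem not_hasContinuousLogOn_sphere (p : ℂ) {R : ℝ} (hR : 0 < R) :
    ¬ HasContinuousLogOn (fun z ↦ z - p) (Metric.sphere p R) := by
  rintro ⟨L, hLc, hL⟩
  have hmem (θ : ℝ) : circleMap p R θ ∈ Metric.sphere p R := circleMap_mem_sphere p hR.le θ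
  have hexp (θ : ℝ) : Complex.exp (L (circleMap p R θ)) = R * Complex.exp (θ * Complex.I) := by
    rw [hL _ (hmem θ), ← circleMap_zero, ← circleMap_sub_center]
  have hlin : EqOn (fun θ ↦ L (circleMap p R θ))
      (fun θ : ℝ ↦ θ * Complex.I + L (circleMap p R 0)) univ := by
    refine eqOn_of_exp_eqOn isPreconnected_univ
      (hLc.comp (continuous_circleMap p R).continuousOn fun θ _ ↦ hmem θ)
      (by fun_prop) (fun θ _ ↦ ?_) (mem_univ 0) (by simp)
    rw [hexp, Complex.exp_add, hexp]
    simp [mul_comm]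
  have hturn : L (circleMap p R (2 * Real.pi)) =
      ↑(2 * Real.pi) * Complex.I + L (circleMap p R 0) := hlin (mem_univ _)
  rw [(periodic_circleMap p R).eq] at hturn
  have hzero : (↑(2 * Real.pi) : ℂ) * Complex.I = 0 := right_eq_add.1 hturn
  simp [Real.pi_ne_zero] at hzero

end ContinuousLog

section Separation

theorem closure_connectedComponentIn_inter_subset {X : Type*} [TopologicalSpace X] {U V : Set X}
    {x : X} (hUV : connectedComponentIn U x ⊆ V) :
    closure (connectedComponentIn U x) ∩ V ⊆ connectedComponentIn V x := by
  rintro z ⟨hz, hzV⟩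
  have hx : x ∈ U := connectedComponentIn_nonempty_iff.1 (closure_nonempty_iff.1 ⟨z, hz⟩)
  have hconn : IsPreconnected (insert z (connectedComponentIn U x)) :=
    isPreconnected_connectedComponentIn.subset_closure (subset_insert _ _)
      (insert_subset hz subset_closure)
  exact hconn.subset_connectedComponentIn (mem_insert_of_mem _ (mem_connectedComponentIn hx))
    (insert_subset hzV hUV) (mem_insert _ _)

theorem inter_union_subset_connectedComponentIn_compl {X : Type*} [TopologicalSpace X]
    {C D E P Q : Set X} {x : X} (hDE : Disjoint D E) (hPQ : Disjoint P Q)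
    (hP : P ⊆ closure (connectedComponentIn Cᶜ x)) (hQ : Q ⊆ C)
    (hD : Disjoint D (connectedComponentIn Cᶜ x)) :
    E ∩ (P ∪ D) ⊆ connectedComponentIn (Q ∪ D)ᶜ x := by
  have hQD : connectedComponentIn Cᶜ x ⊆ (Q ∪ D)ᶜ := by
    rw [compl_union]
    exact subset_inter ((connectedComponentIn_subset _ _).trans (compl_subset_compl.2 hQ))
      hD.subset_compl_left
  rintro z ⟨hzE, hzP | hzD⟩
  · have hz : z ∉ Q ∪ D :=
      not_or.2 ⟨hPQ.notMem_of_mem_left hzP, hDE.notMem_of_mem_right hzE⟩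
    exact closure_connectedComponentIn_inter_subset hQD ⟨hP hzP, hz⟩
  · exact absurd hzE (hDE.notMem_of_mem_left hzD)

theorem exists_mem_notMem_union_of_isPreconnected {X : Type*} [TopologicalSpace X]
    {A B E : Set X} (hE : IsPreconnected E) (hA : IsClosed A) (hB : IsClosed B)
    (hEA : (E ∩ A).Nonempty) (hEB : (E ∩ B).Nonempty) (hEAB : Disjoint E (A ∩ B)) :
    ∃ z ∈ E, z ∉ A ∪ B := by
  by_contra! hcover
  obtain ⟨z, hzE, hzAB⟩ := isPreconnected_closed_iff.1 hE A B hA hB hcover hEA hEB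
  exact hEAB.notMem_of_mem_left hzE hzAB

variable {K A B : Set ℂ} {p q : ℂ}

theorem eventually_hasContinuousLogOn_div (hK : IsClosed K) (hp : p ∉ K) :
    ∀ᶠ q in 𝓝 p, HasContinuousLogOn (fun z ↦ (z - q) / (z - p)) K := by
  obtain ⟨r, hr, hball⟩ := Metric.isOpen_iff.1 hK.isOpen_compl p hp
  filter_upwards [Metric.ball_mem_nhds p hr] with q hq
  have hne (z) (hz : z ∈ K) : z - p ≠ 0 := sub_ne_zero.2 (ne_of_mem_of_not_mem hz hp)
  refine hasContinuousLogOn_of_mapsTo_slitPlane (.div (by fun_prop) (by fun_prop) hne) ?_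
  intro z hz
  have hrz : r ≤ ‖z - p‖ := by
    rw [← dist_eq_norm]
    exact not_lt.1 fun hlt ↦ hball hlt hz
  have hqr : ‖p - q‖ < r := by rwa [← dist_eq_norm, dist_comm]
  have hone_add : 1 + (p - q) / (z - p) = (z - q) / (z - p) := by
    rw [one_add_div (hne z hz), sub_add_sub_cancel]
  change (z - q) / (z - p) ∈ Complex.slitPlane
  rw [← hone_add]
  apply Complex.mem_slitPlane_of_norm_lt_one
  rw [norm_div, div_lt_one (norm_pos_iff.2 (hne z hz))]
  exact hqr.trans_le hrz

theorem hasContinuousLogOn_div_of_mem_connectedComponentIn (hK : IsClosed K)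
    (h : q ∈ connectedComponentIn Kᶜ p) : HasContinuousLogOn (fun z ↦ (z - p) / (z - q)) K := by
  have hsub : connectedComponentIn Kᶜ p ⊆ Kᶜ := connectedComponentIn_subset _ _
  have hp : p ∈ connectedComponentIn Kᶜ p :=
    mem_connectedComponentIn (connectedComponentIn_nonempty_iff.1 ⟨q, h⟩)
  refine isPreconnected_connectedComponentIn.induction₂
    (fun x y ↦ HasContinuousLogOn (fun z ↦ (z - x) / (z - y)) K)
    (fun x hx ↦ ?_) (fun x y w _ hy _ hxy hyw ↦ ?_) (fun x y _ _ hxy ↦ ?_) hp h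
  · filter_upwards [nhdsWithin_le_nhds (eventually_hasContinuousLogOn_div hK (hsub hx))] with y hy
    exact hy.inv.congr fun z _ ↦ inv_div _ _
  · exact (hxy.mul hyw).congr fun z hz ↦
      div_mul_div_cancel₀ (sub_ne_zero.2 (ne_of_mem_of_not_mem hz (hsub hy)))
  · exact hxy.inv.congr fun z _ ↦ inv_div _ _

theorem exists_eq_zero_of_eqOn_sub_compl {U : Set ℂ} (hU : Bornology.IsBounded U) {g : ℂ → ℂ}
    (hg : Continuous g) (p : ℂ) (hgU : EqOn g (fun z ↦ z - p) Uᶜ) : ∃ z, g z = 0 := by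
  by_contra! h0
  obtain ⟨R, hR, hUR⟩ := hU.subset_ball_lt 0 p
  have hsphere : Metric.sphere p R ⊆ Uᶜ := fun z hz hzU ↦ (hUR hzU).ne hz
  exact not_hasContinuousLogOn_sphere p hR
    (((hasContinuousLogOn_univ hg h0).mono (subset_univ _)).congr (hgU.mono hsphere))

theorem mem_connectedComponentIn_of_isBounded (hK : IsClosed K)
    (hbdd : Bornology.IsBounded (connectedComponentIn Kᶜ p))
    (h : HasContinuousLogOn (fun z ↦ (z - p) / (z - q)) K) : q ∈ connectedComponentIn Kᶜ p := by
  classical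
  have hpK : p ∉ K := fun hp ↦ h.ne_zero hp (by simp)
  have hqK : q ∉ K := fun hq ↦ h.ne_zero hq (by simp)
  by_contra hqU
  obtain ⟨L, hLc, hL⟩ := h
  set U := connectedComponentIn Kᶜ p
  have hfrontier : frontier U ⊆ K := fun z hz ↦ by
    rw [hK.isOpen_compl.connectedComponentIn.frontier_eq] at hz
    by_contra hzK
    exact hz.2 (closure_connectedComponentIn_inter_subset (connectedComponentIn_subset _ _)
      ⟨hz.1, hzK⟩)
  obtain ⟨M, hM⟩ := ContinuousMap.exists_restrict_eq hK ⟨K.domRestrict L, hLc.domRestrict⟩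
  have hML (z) (hz : z ∈ K) : M z = L z := DFunLike.congr_fun hM ⟨z, hz⟩
  have hglue (z) (hz : z ∈ frontier U) : Complex.exp (M z) * (z - q) = z - p := by
    have hzK := hfrontier hz
    rw [hML z hzK, hL z hzK, div_mul_cancel₀ _ (sub_ne_zero.2 (ne_of_mem_of_not_mem hzK hqK))]
  obtain ⟨z, hz⟩ := exists_eq_zero_of_eqOn_sub_compl hbdd
    (Continuous.piecewise hglue (by fun_prop) (by fun_prop)) p (piecewise_eqOn_compl U _ _)
  by_cases hzU : z ∈ U
  · rw [piecewise_eq_of_mem _ _ _ hzU] at hz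
    exact mul_ne_zero (Complex.exp_ne_zero _) (sub_ne_zero.2 (ne_of_mem_of_not_mem hzU hqU)) hz
  · rw [piecewise_eq_of_notMem _ _ _ hzU] at hz
    exact hzU (sub_eq_zero.1 hz ▸ mem_connectedComponentIn hpK)

theorem isPreconnected_setOf_lt_norm {R : ℝ} (hR : 0 < R) : IsPreconnected {z : ℂ | R < ‖z‖} := by
  have himage : {z : ℂ | R < ‖z‖} = Complex.exp '' {w | Real.log R < w.re} := by
    ext z
    constructor
    · intro hz
      have hz0 : 0 < ‖z‖ := hR.trans hz
      exact ⟨Complex.log z, by simpa [Complex.log_re] using Real.log_lt_log hR hz,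
        Complex.exp_log (norm_pos_iff.1 hz0)⟩
    · rintro ⟨w, hw, rfl⟩
      simpa [Complex.norm_exp] using (Real.log_lt_iff_lt_exp hR).1 hw
  rw [himage]
  exact (convex_halfSpace_re_gt _).isPreconnected.image _ Complex.continuous_exp.continuousOn

theorem connectedComponentIn_compl_eq_of_not_isBounded (hK : Bornology.IsBounded K)
    (hp : ¬ Bornology.IsBounded (connectedComponentIn Kᶜ p))
    (hq : ¬ Bornology.IsBounded (connectedComponentIn Kᶜ q)) :
    connectedComponentIn Kᶜ p = connectedComponentIn Kᶜ q := by
  obtain ⟨R, hR, hKR⟩ := hK.subset_closedBall_lt 0 0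
  have hout : {z : ℂ | R < ‖z‖} ⊆ Kᶜ := fun z hz hzK ↦
    hz.not_ge (mem_closedBall_zero_iff.1 (hKR hzK))
  have hfar (x : ℂ) (hx : ¬ Bornology.IsBounded (connectedComponentIn Kᶜ x)) :
      ∃ y ∈ connectedComponentIn Kᶜ x, R < ‖y‖ := by
    by_contra! hle
    exact hx (Metric.isBounded_closedBall.subset fun y hy ↦ mem_closedBall_zero_iff.2 (hle y hy))
  obtain ⟨y, hy, hRy⟩ := hfar p hp
  obtain ⟨w, hw, hRw⟩ := hfar q hq
  have hwy : w ∈ connectedComponentIn Kᶜ y :=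
    (isPreconnected_setOf_lt_norm hR).subset_connectedComponentIn hRy hout hRw
  rw [connectedComponentIn_eq hy, connectedComponentIn_eq hwy, connectedComponentIn_eq hw]

theorem mem_connectedComponentIn_compl_iff_hasContinuousLogOn (hK : IsCompact K) :
    q ∈ connectedComponentIn Kᶜ p ↔ HasContinuousLogOn (fun z ↦ (z - p) / (z - q)) K := by
  refine ⟨hasContinuousLogOn_div_of_mem_connectedComponentIn hK.isClosed, fun h ↦ ?_⟩
  have hqq : q ∈ connectedComponentIn Kᶜ q :=
    mem_connectedComponentIn fun hq ↦ h.ne_zero hq (by simp)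
  by_cases hbp : Bornology.IsBounded (connectedComponentIn Kᶜ p)
  · exact mem_connectedComponentIn_of_isBounded hK.isClosed hbp h
  by_cases hbq : Bornology.IsBounded (connectedComponentIn Kᶜ q)
  · have hpq : p ∈ connectedComponentIn Kᶜ q :=
      mem_connectedComponentIn_of_isBounded hK.isClosed hbq (h.inv.congr fun z _ ↦ inv_div _ _)
    rwa [← connectedComponentIn_eq hpq]
  · rwa [connectedComponentIn_compl_eq_of_not_isBounded hK.isBounded hbp hbq]

theorem isPreconnected_compl_image_Icc {γ : ℝ → ℂ} {a b : ℝ} (hγ : ContinuousOn γ (Icc a b))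
    (hinj : InjOn γ (Icc a b)) : IsPreconnected (γ '' Icc a b)ᶜ := by
  refine isPreconnected_of_forall_pair fun p hp q hq ↦
    ⟨_, connectedComponentIn_subset _ p, mem_connectedComponentIn hp, ?_,
      isPreconnected_connectedComponentIn⟩
  have hne {w : ℂ} (hw : w ∉ γ '' Icc a b) (t : ℝ) (ht : t ∈ Icc a b) : γ t - w ≠ 0 :=
    sub_ne_zero.2 (ne_of_mem_of_not_mem (mem_image_of_mem γ ht) hw)
  have harc : IsCompact (γ '' Icc a b) := isCompact_Icc.image_of_continuousOn hγ
  rw [mem_connectedComponentIn_compl_iff_hasContinuousLogOn harc]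
  refine HasContinuousLogOn.image ?_ isCompact_Icc hγ hinj
  exact hasContinuousLogOn_Icc
    ((hγ.sub continuousOn_const).div (hγ.sub continuousOn_const) (hne hq))
    fun t ht ↦ div_ne_zero (hne hp t ht) (hne hq t ht)

theorem connectedComponentIn_compl_inter_subset (hA : IsCompact A) (hB : IsCompact B)
    (hAB : IsPreconnected (A ∩ B)) (p : ℂ) :
    connectedComponentIn Aᶜ p ∩ connectedComponentIn Bᶜ p ⊆ connectedComponentIn (A ∪ B)ᶜ p := by
  rintro q ⟨hqA, hqB⟩
  rw [mem_connectedComponentIn_compl_iff_hasContinuousLogOn] at *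
  exacts [hqA.union hqB hA.isClosed hB.isClosed hAB, hA, hB, hA.union hB]

theorem inter_connectedComponentIn_compl_union_nonempty {E : Set ℂ} (hA : IsCompact A)
    (hB : IsCompact B) (hAB : IsPreconnected (A ∩ B)) (hE : IsPreconnected E)
    (hEA : (E ∩ A).Nonempty) (hEB : (E ∩ B).Nonempty)
    (hEAB : E ∩ A ⊆ connectedComponentIn Bᶜ p) (hEBA : E ∩ B ⊆ connectedComponentIn Aᶜ p) :
    (E ∩ connectedComponentIn (A ∪ B)ᶜ p).Nonempty := by
  have hUo : IsOpen (connectedComponentIn Aᶜ p) := hA.isClosed.isOpen_compl.connectedComponentIn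
  have hVo : IsOpen (connectedComponentIn Bᶜ p) := hB.isClosed.isOpen_compl.connectedComponentIn
  have hEU : (E ∩ connectedComponentIn Aᶜ p).Nonempty :=
    hEB.mono (subset_inter inter_subset_left hEBA)
  have hEV : (E ∩ connectedComponentIn Bᶜ p).Nonempty :=
    hEA.mono (subset_inter inter_subset_left hEAB)
  have hcover : E ⊆ connectedComponentIn Aᶜ p ∪ connectedComponentIn Bᶜ p := by
    refine hE.subset_of_closure_inter_subset (hUo.union hVo)
      (hEU.mono (inter_subset_inter_right E subset_union_left)) ?_
    rw [closure_union, union_inter_distrib_right]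
    refine union_subset ?_ ?_ <;> rintro z ⟨hz, hzE⟩
    · by_cases hzA : z ∈ A
      · exact .inr (hEAB ⟨hzE, hzA⟩)
      · exact .inl (closure_connectedComponentIn_inter_subset (connectedComponentIn_subset _ _)
          ⟨hz, hzA⟩)
    · by_cases hzB : z ∈ B
      · exact .inl (hEBA ⟨hzE, hzB⟩)
      · exact .inr (closure_connectedComponentIn_inter_subset (connectedComponentIn_subset _ _)
          ⟨hz, hzB⟩)
  exact (hE _ _ hUo hVo hcover hEU hEV).mono
    (inter_subset_inter_right E (connectedComponentIn_compl_inter_subset hA hB hAB p))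

end Separation

section ClosedCurve

theorem injOn_Ico_of_periodic {Y : Type*} {f : ℝ → Y} {T a : ℝ} (hper : Function.Periodic f T)
    (hT : 0 < T) (hinj : InjOn f (Ico a (a + T))) (b : ℝ) : InjOn f (Ico b (b + T)) := by
  have hmod (x : ℝ) : f (toIcoMod hT a x) = f x := hper.sub_zsmul_eq _
  intro x hx y hy hxy
  have hxy' : toIcoMod hT a x = toIcoMod hT a y :=
    hinj (toIcoMod_mem_Ico hT a x) (toIcoMod_mem_Ico hT a y) (by rw [hmod, hmod, hxy])
  rw [← (toIcoMod_eq_self hT).2 hx, ← (toIcoMod_eq_self hT).2 hy,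
    ← toIcoMod_toIcoMod hT b a x, hxy', toIcoMod_toIcoMod]

theorem exists_injOn_Icc_range_subset {Y : Type*} [TopologicalSpace Y] {f : ℝ → Y} {T : ℝ}
    (hf : Continuous f) (hper : Function.Periodic f T) (hT : 0 < T)
    (hinj : ∀ a, InjOn f (Ico a (a + T))) {t : ℝ} {U : Set Y} (hU : U ∈ 𝓝 (f t)) :
    ∃ a b, InjOn f (Icc a b) ∧ range f ⊆ U ∪ f '' Icc a b := by
  obtain ⟨l, u, ⟨hlt, htu⟩, hlu⟩ :=
    mem_nhds_iff_exists_Ioo_subset.1 (hf.continuousAt.preimage_mem_nhds hU)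
  have harc : Icc u (l + T) ⊆ Ico t (t + T) :=
    fun s hs ↦ ⟨htu.le.trans hs.1, by linarith [hs.2]⟩
  refine ⟨u, l + T, (hinj t).mono harc, ?_⟩
  rw [← hper.image_Icc hT t]
  rintro _ ⟨s, ⟨hts, hst⟩, rfl⟩
  rcases lt_or_ge s u with hsu | hus
  · exact .inl (hlu ⟨by linarith, hsu⟩)
  rcases lt_or_ge (l + T) s with hls | hsl
  · left
    rw [← hper.sub_eq]
    exact hlu ⟨by linarith, by linarith⟩
  · exact .inr ⟨s, ⟨hus, hsl⟩, rfl⟩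

theorem range_eq_image_Ico {Y : Type*} {f : ℝ → Y} {T : ℝ} (hper : Function.Periodic f T)
    (hT : 0 < T) (a : ℝ) : range f = f '' Ico a (a + T) := by
  refine (range_subset_iff.2 fun x ↦ ?_).antisymm (image_subset_range _ _)
  obtain ⟨y, hy, hxy⟩ := hper.exists_mem_Ico hT x a
  exact ⟨y, hy, hxy.symm⟩

theorem disjoint_image_Icc_connectedComponentIn_compl {Y : Type*} [TopologicalSpace Y]
    {δ : ℝ → Y} {C : Set Y} {x : Y} {a b : ℝ} (hab : a ≤ b) (ha : δ a ∈ C) (hb : δ b ∈ C)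
    (hδ : Disjoint (δ '' Ioo a b) (connectedComponentIn Cᶜ x)) :
    Disjoint (δ '' Icc a b) (connectedComponentIn Cᶜ x) := by
  rw [← Ioo_union_both hab, image_union, image_pair]
  exact hδ.union_left <| (subset_compl_iff_disjoint_right.1 (connectedComponentIn_subset _ _)).symm
    |>.mono_left (pair_subset ha hb)

theorem image_Icc_union_eq {Y : Type*} {f : ℝ → Y} {D : Set Y} {a b : ℝ} (hab : a ≤ b)
    (ha : f a ∈ D) (hb : f b ∈ D) : f '' Icc a b ∪ D = f '' Ioo a b ∪ D := by
  rw [← Ioo_union_both hab, image_union, image_pair, union_assoc,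
    union_eq_right.2 (pair_subset ha hb)]

theorem isCompact_image_Ioo_union {Y : Type*} [TopologicalSpace Y] {f : ℝ → Y} {D : Set Y}
    {a b : ℝ} (hf : Continuous f) (hD : IsCompact D) (hab : a ≤ b) (ha : f a ∈ D) (hb : f b ∈ D) :
    IsCompact (f '' Ioo a b ∪ D) :=
  image_Icc_union_eq hab ha hb ▸ (isCompact_Icc.image hf).union hD

theorem image_Ioo_union_image_Ioo_union_eq {Y : Type*} {f : ℝ → Y} {T : ℝ} {D : Set Y} {a b : ℝ}
    (hper : Function.Periodic f T) (hab : a < b) (hba : b < a + T) (ha : f a ∈ D) (hb : f b ∈ D) :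
    (f '' Ioo a b ∪ D) ∪ (f '' Ioo b (a + T) ∪ D) = range f ∪ D := by
  rw [← image_Icc_union_eq hab.le ha hb, ← image_Icc_union_eq hba.le hb ((hper a).symm ▸ ha),
    ← union_union_distrib_right, ← image_union, Icc_union_Icc_eq_Icc hab.le hba.le,
    hper.image_Icc (by linarith)]

variable {f : ℝ → ℂ} {T : ℝ}

theorem range_subset_closure_connectedComponentIn (hf : Continuous f)
    (hper : Function.Periodic f T) (hT : 0 < T) (hinj : ∀ a, InjOn f (Ico a (a + T)))
    (hsep : ¬ IsPreconnected (range f)ᶜ) {p : ℂ} (hp : p ∉ range f) :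
    range f ⊆ closure (connectedComponentIn (range f)ᶜ p) := by
  rintro _ ⟨t, rfl⟩
  by_contra ht
  set F := connectedComponentIn (range f)ᶜ p
  obtain ⟨a, b, hab, hcover⟩ := exists_injOn_Icc_range_subset hf hper hT hinj
    (isClosed_closure.isOpen_compl.mem_nhds ht)
  have hrange : IsClosed (range f) := by
    rw [← hper.image_Icc hT 0]
    exact (isCompact_Icc.image hf).isClosed
  have hcompl : (range f)ᶜ ⊆ (f '' Icc a b)ᶜ := compl_subset_compl.2 (image_subset_range f _)
  have hpF : p ∈ F := mem_connectedComponentIn hp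
  have harc : (f '' Icc a b)ᶜ ⊆ F := by
    refine (isPreconnected_compl_image_Icc hf.continuousOn hab).subset_of_closure_inter_subset
      hrange.isOpen_compl.connectedComponentIn ⟨p, hcompl hp, hpF⟩ ?_
    rintro z ⟨hzF, hzarc⟩
    have hz : z ∉ range f := fun hz ↦ (hcover hz).elim (· hzF) hzarc
    exact closure_connectedComponentIn_inter_subset (connectedComponentIn_subset _ _) ⟨hzF, hz⟩
  have heq : F = (range f)ᶜ := (connectedComponentIn_subset _ _).antisymm (hcompl.trans harc)
  exact hsep (heq ▸ isPreconnected_connectedComponentIn)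

theorem inter_nonempty_of_interleaved (hf : Continuous f) (hper : Function.Periodic f T)
    (hinj : InjOn f (Ico 0 T)) {t₁ t₂ t₃ t₄ : ℝ} (h₁₂ : t₁ < t₂) (h₂₃ : t₂ < t₃) (h₃₄ : t₃ < t₄)
    (h₄₁ : t₄ < t₁ + T) {x₀ : ℂ} (hx₀ : x₀ ∉ range f) {D E : Set ℂ} (hDc : IsCompact D)
    (hD : IsPreconnected D) (hE : IsPreconnected E)
    (hDF : Disjoint D (connectedComponentIn (range f)ᶜ x₀))
    (hEF : Disjoint E (connectedComponentIn (range f)ᶜ x₀))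
    (hD₁ : f t₁ ∈ D) (hD₃ : f t₃ ∈ D) (hE₂ : f t₂ ∈ E) (hE₄ : f t₄ ∈ E) : (D ∩ E).Nonempty := by
  by_contra hDE
  rw [← not_disjoint_iff_nonempty_inter, not_not] at hDE
  set F := connectedComponentIn (range f)ᶜ x₀
  have hT : 0 < T := by linarith
  have hinj' (a : ℝ) : InjOn f (Ico a (a + T)) :=
    injOn_Ico_of_periodic hper hT (by rwa [zero_add]) a
  have h₁₃ : t₁ < t₃ := h₁₂.trans h₂₃
  have h₃₁ : t₃ < t₁ + T := h₃₄.trans h₄₁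
  set P := f '' Ioo t₁ t₃
  set Q := f '' Ioo t₃ (t₁ + T)
  have hPQ : Disjoint P Q := Disjoint.image
    (disjoint_left.2 fun _ hs hs' ↦ lt_asymm hs.2 hs'.1) (hinj' t₁)
    ((Ioo_subset_Ioo_right h₃₁.le).trans Ioo_subset_Ico_self)
    ((Ioo_subset_Ioo_left h₁₃.le).trans Ioo_subset_Ico_self)
  have hPQD : (P ∪ D) ∩ (Q ∪ D) = D := by
    rw [← inter_union_distrib_right, hPQ.inter_eq, empty_union]
  have hPD : IsCompact (P ∪ D) := isCompact_image_Ioo_union hf hDc h₁₃.le hD₁ hD₃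
  have hQD : IsCompact (Q ∪ D) :=
    isCompact_image_Ioo_union hf hDc h₃₁.le hD₃ ((hper t₁).symm ▸ hD₁)
  have hcurve : (P ∪ D) ∪ (Q ∪ D) = range f ∪ D :=
    image_Ioo_union_image_Ioo_union_eq hper h₁₃ h₃₁ hD₁ hD₃
  have hEP : (E ∩ (P ∪ D)).Nonempty := ⟨_, hE₂, .inl (mem_image_of_mem f ⟨h₁₂, h₂₃⟩)⟩
  have hEQ : (E ∩ (Q ∪ D)).Nonempty := ⟨_, hE₄, .inl (mem_image_of_mem f ⟨h₃₄, h₄₁⟩)⟩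
  have hsep : ¬ IsPreconnected (range f)ᶜ := fun hconn ↦ by
    obtain ⟨q, hqE, hq⟩ := exists_mem_notMem_union_of_isPreconnected hE hPD.isClosed hQD.isClosed
      hEP hEQ (hPQD.symm ▸ hDE.symm)
    have hqF : q ∈ F := hconn.subset_connectedComponentIn hx₀ Subset.rfl
      fun hqf ↦ hq (hcurve ▸ .inl hqf)
    exact hEF.notMem_of_mem_left hqE hqF
  have hboundary : range f ⊆ closure F :=
    range_subset_closure_connectedComponentIn hf hper hT hinj' hsep hx₀
  have hPf : P ⊆ range f := image_subset_range _ _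
  have hQf : Q ⊆ range f := image_subset_range _ _
  obtain ⟨z, hzE, hz⟩ := inter_connectedComponentIn_compl_union_nonempty hPD hQD
    (hPQD.symm ▸ hD) hE hEP hEQ
    (inter_union_subset_connectedComponentIn_compl hDE hPQ (hPf.trans hboundary) hQf hDF)
    (inter_union_subset_connectedComponentIn_compl hDE hPQ.symm (hQf.trans hboundary) hPf hDF)
  rw [hcurve] at hz
  exact hEF.notMem_of_mem_left hzE
    (connectedComponentIn_mono x₀ (compl_subset_compl.2 subset_union_left) hz)

end ClosedCurve

end PlaneSeparation

open PlaneSeparation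

theorem interleaved_diagonals_outside_face_cross_general {X : Type*} [AddCommGroup X] [Module ℝ X]
    [TopologicalSpace X] [IsTopologicalAddGroup X] [ContinuousSMul ℝ X] [T2Space X]
    (hX : Module.finrank ℝ X = 2) {f : ℝ → X} {T : ℝ} (hf : Continuous f)
    (hper : Function.Periodic f T) (hinj : InjOn f (Ico 0 T)) {t₁ t₂ t₃ t₄ : ℝ} (h₁₂ : t₁ < t₂)
    (h₂₃ : t₂ < t₃) (h₃₄ : t₃ < t₄) (h₄₁ : t₄ < t₁ + T) {x₀ : X} (hx₀ : x₀ ∉ range f)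
    {D E : Set X} (hDc : IsCompact D) (hD : IsPreconnected D) (hE : IsPreconnected E)
    (hDF : Disjoint D (connectedComponentIn (range f)ᶜ x₀))
    (hEF : Disjoint E (connectedComponentIn (range f)ᶜ x₀))
    (hD₁ : f t₁ ∈ D) (hD₃ : f t₃ ∈ D) (hE₂ : f t₂ ∈ E) (hE₄ : f t₄ ∈ E) : (D ∩ E).Nonempty := by
  have : FiniteDimensional ℝ X := .of_finrank_pos (by lia)
  let e : X ≃ₜ ℂ := (ContinuousLinearEquiv.ofFinrankEq
    (hX.trans Complex.finrank_real_complex.symm)).toHomeomorph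
  have hface : connectedComponentIn (range (e ∘ f))ᶜ (e x₀) =
      e '' connectedComponentIn (range f)ᶜ x₀ := by
    rw [e.image_connectedComponentIn hx₀, range_comp, image_compl_eq e.bijective]
  have hinter : (e '' D ∩ e '' E).Nonempty := by
    refine inter_nonempty_of_interleaved (e.continuous.comp hf) (hper.comp e)
      (e.injective.comp_injOn hinj) h₁₂ h₂₃ h₃₄ h₄₁ (x₀ := e x₀) ?_ (hDc.image e.continuous)
      (hD.image e e.continuous.continuousOn) (hE.image e e.continuous.continuousOn) ?_ ?_
      (mem_image_of_mem e hD₁) (mem_image_of_mem e hD₃) (mem_image_of_mem e hE₂)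
      (mem_image_of_mem e hE₄)
    · rwa [range_comp, e.injective.mem_set_image]
    · rwa [hface, disjoint_image_iff e.injective]
    · rwa [hface, disjoint_image_iff e.injective]
  rwa [← image_inter e.injective, image_nonempty] at hinter

/-- Geometric core of Lemma 3.1's adjacency claim: let `f` be a simple closed curve in
the plane (continuous, `1`-periodic, injective on `[0,1)`) with image `C`, let `F` be a
connected component of the complement of `C` (a face), and let `f t₁, f t₂, f t₃, f t₄`
be four points appearing in this cyclic order on the curve. Then two arcs joining
`f t₁` to `f t₃` and `f t₂` to `f t₄`, whose interiors avoid both the face `F` and the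
curve `C` (i.e. both "diagonals" are drawn outside the face), cannot be disjoint: they
are forced to cross. Consequently `v₁v₃` and `v₂v₄` cannot both be edges of a plane
graph with face `F`, i.e. at least one of the pairs `(v₁,v₃)`, `(v₂,v₄)` is
non-adjacent. -/
theorem interleaved_diagonals_outside_face_cross
    (f : ℝ → ℝ × ℝ) (hf : Continuous f) (hper : ∀ t, f (t + 1) = f t)
    (hinj : Set.InjOn f (Set.Ico 0 1))
    (t₁ t₂ t₃ t₄ : ℝ) (ht : 0 ≤ t₁ ∧ t₁ < t₂ ∧ t₂ < t₃ ∧ t₃ < t₄ ∧ t₄ < 1)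
    (C : Set (ℝ × ℝ)) (hC : C = f '' Set.Ico 0 1)
    (x₀ : ℝ × ℝ) (hx₀ : x₀ ∉ C)
    (F : Set (ℝ × ℝ)) (hF : F = connectedComponentIn Cᶜ x₀)
    (δ₁ δ₂ : ℝ → ℝ × ℝ)
    (hδ₁c : ContinuousOn δ₁ (Set.Icc 0 1)) (hδ₂c : ContinuousOn δ₂ (Set.Icc 0 1))
    (hδ₁e : δ₁ 0 = f t₁ ∧ δ₁ 1 = f t₃) (hδ₂e : δ₂ 0 = f t₂ ∧ δ₂ 1 = f t₄)
    (hδ₁i : δ₁ '' Set.Ioo 0 1 ⊆ (F ∪ C)ᶜ) (hδ₂i : δ₂ '' Set.Ioo 0 1 ⊆ (F ∪ C)ᶜ) :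
    ¬ Disjoint (δ₁ '' Set.Icc 0 1) (δ₂ '' Set.Icc 0 1) := by
  obtain ⟨ht₁, h₁₂, h₂₃, h₃₄, ht₄⟩ := ht
  obtain rfl : C = range f := hC.trans (by simpa using (range_eq_image_Ico hper one_pos 0).symm)
  subst hF
  have hdisj {δ : ℝ → ℝ × ℝ} {s t : ℝ} (he : δ 0 = f s ∧ δ 1 = f t)
      (hi : δ '' Ioo 0 1 ⊆ (connectedComponentIn (range f)ᶜ x₀ ∪ range f)ᶜ) :
      Disjoint (δ '' Icc 0 1) (connectedComponentIn (range f)ᶜ x₀) :=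
    disjoint_image_Icc_connectedComponentIn_compl zero_le_one (he.1 ▸ mem_range_self s)
      (he.2 ▸ mem_range_self t)
      ((subset_compl_iff_disjoint_right.1 hi).mono_right subset_union_left)
  have h0 : (0 : ℝ) ∈ Icc (0 : ℝ) 1 := left_mem_Icc.2 zero_le_one
  have h1 : (1 : ℝ) ∈ Icc (0 : ℝ) 1 := right_mem_Icc.2 zero_le_one
  rw [not_disjoint_iff_nonempty_inter]
  exact interleaved_diagonals_outside_face_cross_general (by simp) hf hper hinj h₁₂ h₂₃ h₃₄
    (by linarith) hx₀ (isCompact_Icc.image_of_continuousOn hδ₁c)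
    (isPreconnected_Icc.image δ₁ hδ₁c) (isPreconnected_Icc.image δ₂ hδ₂c) (hdisj hδ₁e hδ₁i)
    (hdisj hδ₂e hδ₂i) ⟨0, h0, hδ₁e.1⟩ ⟨1, h1, hδ₁e.2⟩ ⟨0, h0, hδ₂e.1⟩ ⟨1, h1, hδ₂e.2⟩
end
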